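/- The stairs functional R_ξ is nondecreasing, and for every t ≥ 0 it admits the variational representation R_ξ(t) = sup{ Σ_{i=1}^k ξ_{t_i} : k ∈ ℕ, 0 ≤ t_1 < t_2 < … < t_k ≤ t, and t_i − t_{i−1} ≥ 1 for all 2 ≤ i ≤ k }, where the supremum over the empty collection (k = 0) is taken to be 0. -/

import Mathlib

open MeasureTheory Real Filter Set

noncomputable section

/-- Auxiliary construction of the stairs functional: `stairsAux ξ n` agrees with `R_ξ` on
`(-∞, n]`; on `(n-1, n]` it is given by the defining recursion
`R_ξ(t) = sup_{s ∈ [0,1]} (R_ξ(t−s−1) + ξ(t−s))`. -/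
def stairsAux (ξ : ℝ → ℝ) : ℕ → ℝ → ℝ
  | 0, _ => 0
  | n + 1, t =>
    if t ≤ n then stairsAux ξ n t
    else ⨆ s : Set.Icc (0 : ℝ) 1, (stairsAux ξ n (t - (s : ℝ) - 1) + ξ (t - (s : ℝ)))

/-- The stairs functional `R_ξ`: `R_ξ(t) = 0` for `t ≤ 0` and, inductively for `t ∈ (n, n+1]`,
`R_ξ(t) = sup_{s ∈ [0,1]} (R_ξ(t−s−1) + ξ(t−s))`. -/
def stairs (ξ : ℝ → ℝ) (t : ℝ) : ℝ :=
  stairsAux ξ ⌈t⌉₊ t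

/-!
Splitting off the last time `v` of a nonempty chain leaves a chain in `[0, v - 1]`, so the chain
sums obey the same one-step recursion as `R_ξ`. A last time `v ≤ t - 1` need not be considered:
appending `t` itself only increases the sum, as `ξ ≥ 0`. Hence only last times `t - s` with
`s ∈ [0, 1]` matter, and both sides of the variational formula agree by induction on `⌈t⌉`.
Monotonicity is then clear, since enlarging `t` enlarges the set of chains.
-/

theorem unitStep_induction {R : Type*} [Ring R] [LinearOrder R] [IsStrictOrderedRing R]
    [Archimedean R] {P : R → Prop} (nonpos : ∀ t ≤ 0, P t)
    (step : ∀ t, 0 < t → (∀ u ≤ t - 1, P u) → P t) (t : R) : P t := by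
  obtain ⟨n, hn⟩ := exists_nat_ge t
  induction n generalizing t with
  | zero => exact nonpos t (by simpa only [Nat.cast_zero] using hn)
  | succ n ih =>
    rcases le_or_gt t 0 with ht | ht
    · exact nonpos t ht
    · refine step t ht fun u hu => ih u (hu.trans ?_)
      rwa [sub_le_iff_le_add, ← Nat.cast_succ]

theorem bddAbove_image_of_finite_superlevel {α β : Type*} [LinearOrder β] {f : α → β} {s : Set α}
    {a : β} (h : {x | x ∈ s ∧ a ≤ f x}.Finite) : BddAbove (f '' s) := by
  have : Nonempty β := ⟨a⟩
  refine ((h.image f).bddAbove.union (bddAbove_Iic (a := a))).mono ?_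
  rintro _ ⟨x, hx, rfl⟩
  exact (le_total a (f x)).imp (fun hax => mem_image_of_mem f ⟨hx, hax⟩) id

/-- The tuples `0 ≤ t₁ < ⋯ < t_k ≤ t` with consecutive gaps at least `1` over which the variational
formula optimizes. They are indexed from `0` by `Fin k`. -/
def IsSeparatedChain (t : ℝ) {k : ℕ} (ts : Fin k → ℝ) : Prop :=
  StrictMono ts ∧ (∀ i, ts i ∈ Icc (0 : ℝ) t) ∧
    ∀ (i : Fin k) (h : (i : ℕ) + 1 < k), 1 ≤ ts ⟨(i : ℕ) + 1, h⟩ - ts i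

theorem isSeparatedChain_iff {t : ℝ} {k : ℕ} {ts : Fin k → ℝ} :
    IsSeparatedChain t ts ↔ (∀ i, ts i ∈ Icc 0 t) ∧ ∀ i j, i < j → ts i ≤ ts j - 1 := by
  constructor
  · rintro ⟨hmono, hmem, hgap⟩
    refine ⟨hmem, fun i j hij => ?_⟩
    have hsucc : (i : ℕ) + 1 < k := by omega
    have hle : ts ⟨(i : ℕ) + 1, hsucc⟩ ≤ ts j := hmono.monotone (Nat.succ_le_of_lt hij)
    linarith [hgap i hsucc]
  · rintro ⟨hmem, hgap⟩
    refine ⟨fun i j hij => by linarith [hgap i j hij], hmem, fun i h => ?_⟩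
    linarith [hgap i ⟨(i : ℕ) + 1, h⟩ (Nat.lt_succ_self i)]

theorem IsSeparatedChain.mono {t u : ℝ} (htu : t ≤ u) {k : ℕ} {ts : Fin k → ℝ}
    (h : IsSeparatedChain t ts) : IsSeparatedChain u ts :=
  ⟨h.1, fun i => Icc_subset_Icc_right htu (h.2.1 i), h.2.2⟩

theorem isSeparatedChain_succ_iff {t : ℝ} {k : ℕ} {ts : Fin (k + 1) → ℝ} :
    IsSeparatedChain t ts ↔
      ts (Fin.last k) ∈ Icc 0 t ∧ IsSeparatedChain (ts (Fin.last k) - 1) (Fin.init ts) := by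
  simp only [isSeparatedChain_iff]
  constructor
  · rintro ⟨hmem, hgap⟩
    exact ⟨hmem _, fun i => ⟨(hmem _).1, hgap _ _ i.castSucc_lt_last⟩,
      fun i j hij => hgap _ _ (Fin.castSucc_lt_castSucc_iff.mpr hij)⟩
  · rintro ⟨hlast, hmem, hgap⟩
    have hinit : ∀ i : Fin k, ts i.castSucc ∈ Icc 0 (ts (Fin.last k) - 1) := hmem
    refine ⟨Fin.forall_fin_succ'.mpr ⟨fun i => ⟨(hinit i).1, ?_⟩, hlast⟩, fun i j hij => ?_⟩
    · linarith [(hinit i).2, hlast.2]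
    · obtain ⟨i, rfl⟩ := Fin.exists_castSucc_eq.mpr (Fin.ne_last_of_lt hij)
      induction j using Fin.lastCases with
      | last => exact (hinit i).2
      | cast j => exact hgap i j (Fin.castSucc_lt_castSucc_iff.mp hij)

section ChainSums

variable {M : Type*} [AddCommMonoid M] {ξ : ℝ → M} {t : ℝ}

/-- The sums `ξ_{t₁} + ⋯ + ξ_{t_k}` over all separated chains in `[0, t]`; their supremum is the
right-hand side of the variational formula. The empty chain contributes `0`. -/
def chainSums (ξ : ℝ → M) (t : ℝ) : Set M :=
  {y | ∃ (k : ℕ) (ts : Fin k → ℝ), IsSeparatedChain t ts ∧ y = ∑ i, ξ (ts i)}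

theorem chainSums_mono (ξ : ℝ → M) : Monotone (chainSums ξ) := by
  rintro t u htu _ ⟨k, ts, hts, rfl⟩
  exact ⟨k, ts, hts.mono htu, rfl⟩

theorem mem_chainSums_iff {y : M} :
    y ∈ chainSums ξ t ↔ y = 0 ∨ ∃ v ∈ Icc 0 t, ∃ z ∈ chainSums ξ (v - 1), y = z + ξ v := by
  constructor
  · rintro ⟨_ | k, ts, hts, rfl⟩
    · exact Or.inl (Fin.sum_univ_zero _)
    · obtain ⟨hlast, hinit⟩ := isSeparatedChain_succ_iff.mp hts
      exact Or.inr ⟨ts (Fin.last k), hlast, _, ⟨k, Fin.init ts, hinit, rfl⟩,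
        Fin.sum_univ_castSucc _⟩
  · rintro (rfl | ⟨v, hv, _, ⟨k, ts, hts, rfl⟩, rfl⟩)
    · exact ⟨0, Fin.elim0, isSeparatedChain_iff.mpr ⟨fun i => i.elim0, fun i => i.elim0⟩,
        (Fin.sum_univ_zero _).symm⟩
    · refine ⟨k + 1, Fin.snoc (α := fun _ => ℝ) ts v, isSeparatedChain_succ_iff.mpr ?_, ?_⟩
      · simpa only [Fin.snoc_last, Fin.init_snoc] using And.intro hv hts
      · simp only [Fin.sum_univ_castSucc, Fin.snoc_castSucc, Fin.snoc_last]

theorem zero_mem_chainSums (ξ : ℝ → M) (t : ℝ) : 0 ∈ chainSums ξ t :=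
  mem_chainSums_iff.mpr (Or.inl rfl)

theorem chainSums_of_nonpos (hξneg : ∀ t ≤ 0, ξ t = 0) (ht : t ≤ 0) : chainSums ξ t = {0} := by
  refine eq_singleton_iff_unique_mem.mpr ⟨zero_mem_chainSums ξ t, ?_⟩
  rintro _ ⟨k, ts, hts, rfl⟩
  exact Finset.sum_eq_zero fun i _ => hξneg _ ((hts.2.1 i).2.trans ht)

theorem mem_upperBounds_chainSums_iff [PartialOrder M] [IsOrderedAddMonoid M]
    (hξ0 : ∀ t, 0 ≤ ξ t) (hξneg : ∀ t ≤ 0, ξ t = 0) {b : M} :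
    b ∈ upperBounds (chainSums ξ t) ↔
      ∀ s ∈ Icc (0 : ℝ) 1, ∀ z ∈ chainSums ξ (t - s - 1), z + ξ (t - s) ≤ b := by
  constructor
  · intro hb s ⟨hs0, _⟩ z hz
    rcases le_total (t - s) 0 with hts | hts
    · rw [hξneg _ hts, add_zero]
      exact hb (chainSums_mono ξ (by linarith) hz)
    · exact hb (mem_chainSums_iff.mpr (Or.inr ⟨t - s, ⟨hts, by linarith⟩, z, hz, rfl⟩))
  · intro hb
    have early_le : ∀ y ∈ chainSums ξ (t - 1), y ≤ b := fun y hy =>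
      (le_add_of_nonneg_right (hξ0 t)).trans
        (by simpa only [sub_zero] using hb 0 unitInterval.zero_mem y (by rwa [sub_zero]))
    intro y hy
    rcases mem_chainSums_iff.mp hy with rfl | ⟨v, hv, z, hz, rfl⟩
    · exact early_le 0 (zero_mem_chainSums ξ _)
    · rcases le_total v (t - 1) with hvt | hvt
      · exact early_le _ (mem_chainSums_iff.mpr (Or.inr ⟨v, ⟨hv.1, hvt⟩, z, hz, rfl⟩))
      · have hlast := hb (t - v) ⟨by linarith [hv.2], by linarith⟩ z
        rw [sub_sub_cancel] at hlast
        exact hlast hz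

theorem bddAbove_chainSums [PartialOrder M] [IsOrderedAddMonoid M]
    (hξ0 : ∀ t, 0 ≤ ξ t) (hξneg : ∀ t ≤ 0, ξ t = 0)
    (hξbdd : ∀ b c, BddAbove (ξ '' Icc b c)) (t : ℝ) : BddAbove (chainSums ξ t) := by
  induction t using unitStep_induction with
  | nonpos t ht => exact chainSums_of_nonpos hξneg ht ▸ bddAbove_singleton
  | step t _ ih =>
    obtain ⟨B, hB⟩ := ih (t - 1) le_rfl
    obtain ⟨C, hC⟩ := hξbdd (t - 1) t
    refine ⟨B + C, (mem_upperBounds_chainSums_iff hξ0 hξneg).mpr fun s ⟨hs0, hs1⟩ z hz => ?_⟩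
    exact add_le_add (hB (chainSums_mono ξ (by linarith) hz))
      (hC (mem_image_of_mem ξ ⟨by linarith, by linarith⟩))

end ChainSums

section Stairs

variable {ξ : ℝ → ℝ} {t : ℝ}

theorem stairsAux_eq_stairs {n : ℕ} (ht : t ≤ n) : stairsAux ξ n t = stairs ξ t := by
  induction n with
  | zero => rw [stairs, Nat.ceil_eq_zero.mpr (by simpa only [Nat.cast_zero] using ht)]
  | succ n ih =>
    by_cases htn : t ≤ n
    · rw [stairsAux, if_pos htn, ih htn]
    · have hceil : ⌈t⌉₊ = n + 1 := le_antisymm (Nat.ceil_le.mpr ht)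
        (Nat.succ_le_of_lt (Nat.lt_ceil.mpr (not_le.mp htn)))
      rw [stairs, hceil]

theorem stairs_of_nonpos (ht : t ≤ 0) : stairs ξ t = 0 := by
  rw [stairs, Nat.ceil_eq_zero.mpr ht, stairsAux]

theorem stairs_of_pos (ht : 0 < t) :
    stairs ξ t = ⨆ s : Icc (0 : ℝ) 1, (stairs ξ (t - s - 1) + ξ (t - s)) := by
  obtain ⟨n, hn⟩ := Nat.exists_eq_succ_of_ne_zero (Nat.ceil_pos.mpr ht).ne'
  have hlt : ¬t ≤ n := not_le.mpr (Nat.lt_ceil.mp (hn ▸ Nat.lt_succ_self n))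
  have hle : t ≤ n + 1 := by simpa only [hn, Nat.cast_succ] using Nat.le_ceil t
  rw [stairs, hn, stairsAux, if_neg hlt]
  exact iSup_congr fun s => by rw [stairsAux_eq_stairs (by linarith [s.2.1])]

theorem isLUB_stairs (hξ0 : ∀ t, 0 ≤ ξ t) (hξneg : ∀ t ≤ 0, ξ t = 0)
    (hξbdd : ∀ b c, BddAbove (ξ '' Icc b c)) (t : ℝ) : IsLUB (chainSums ξ t) (stairs ξ t) := by
  induction t using unitStep_induction with
  | nonpos t ht =>
    rw [chainSums_of_nonpos hξneg ht, stairs_of_nonpos ht]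
    exact isLUB_singleton
  | step t ht ih =>
    have upperBounds_eq : upperBounds (chainSums ξ t) =
        upperBounds (range fun s : Icc (0 : ℝ) 1 => stairs ξ (t - s - 1) + ξ (t - s)) := by
      ext b
      rw [mem_upperBounds_chainSums_iff hξ0 hξneg, mem_upperBounds, forall_mem_range,
        Subtype.forall]
      refine forall₂_congr fun s hs => ?_
      rw [← le_sub_iff_add_le, isLUB_le_iff (ih (t - s - 1) (by linarith [hs.1]))]
      simp only [mem_upperBounds, le_sub_iff_add_le]
    have hbdd := bddAbove_chainSums hξ0 hξneg hξbdd t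
    rw [BddAbove, upperBounds_eq] at hbdd
    rw [stairs_of_pos ht, isLUB_congr upperBounds_eq]
    exact isLUB_ciSup hbdd

end Stairs

theorem stmt_11_general (ξ : ℝ → ℝ) (hξ0 : ∀ t, 0 ≤ ξ t) (hξneg : ∀ t ≤ (0 : ℝ), ξ t = 0)
    (hξbdd : ∀ b c, BddAbove (ξ '' Icc b c)) :
    Monotone (stairs ξ) ∧ ∀ t, IsLUB (chainSums ξ t) (stairs ξ t) :=
  have hlub := isLUB_stairs hξ0 hξneg hξbdd
  ⟨fun t u htu => (hlub t).mono (hlub u) (chainSums_mono ξ htu), hlub⟩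

/-- the stairs functional `R_ξ` is nondecreasing and, for `t ≥ 0`, admits the
variational representation
`R_ξ(t) = sup { Σ_{i=1}^k ξ_{t_i} : k ∈ ℕ, 0 ≤ t_1 < … < t_k ≤ t, t_i − t_{i−1} ≥ 1 }`,
with the empty collection contributing `0`. -/
theorem stmt_11 (ξ : ℝ → ℝ) (hξ0 : ∀ t, 0 ≤ ξ t) (hξneg : ∀ t ≤ (0 : ℝ), ξ t = 0)
    (hξfin : ∀ a : ℝ, 0 < a → ∀ b c : ℝ, {t | t ∈ Set.Icc b c ∧ a ≤ ξ t}.Finite) :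
    Monotone (stairs ξ) ∧
    ∀ t : ℝ, 0 ≤ t →
      stairs ξ t = sSup {y : ℝ | ∃ (k : ℕ) (ts : Fin k → ℝ),
        StrictMono ts ∧ (∀ i, ts i ∈ Set.Icc (0 : ℝ) t) ∧
        (∀ (i : Fin k) (h : (i : ℕ) + 1 < k), 1 ≤ ts ⟨(i : ℕ) + 1, h⟩ - ts i) ∧
        y = ∑ i, ξ (ts i)} := by
  obtain ⟨hmono, hlub⟩ := stmt_11_general ξ hξ0 hξneg fun b c =>
    bddAbove_image_of_finite_superlevel (hξfin 1 one_pos b c)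
  exact ⟨hmono, fun t _ => by
    simpa only [chainSums, IsSeparatedChain, and_assoc] using
      ((hlub t).csSup_eq (hlub t).nonempty).symm⟩

end
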